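/- arXiv:0804.1653 — 7 statements merged into one kernel-verified Lean document; each statement's English description precedes it below -/
import Mathlib

section
/- Let q ≥ 0, let 𝒳 be a convex subset of a real vector space, and let f : 𝒳 → ℝ be q-convex. Then for every n ∈ ℕ, every x_1, …, x_n ∈ 𝒳, and every weight vector (π_1, …, π_n) in the simplex Δ^{n-1}, one has f(Σ_{i=1}^n π_i x_i) ≤ Σ_{i=1}^n π_i^q f(x_i). -/
/-!
Since `t ↦ t ^ q` is multiplicative, `q`-convexity is equivalent to its homogeneous form
`(a + b) ^ q * f ((a x + b y) / (a + b)) ≤ a ^ q * f x + b ^ q * f y`, so positively weighted points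
can be merged into their center of mass one at a time, without renormalizing the weights. Points of
weight zero do not move the center of mass, and taking `λ = 0` and `x = y` in the definition of
`q`-convexity shows that their terms `0 ^ q * f x` only enlarge the right-hand side (the term is
`f x` when `q = 0`, and `0` otherwise, also for `q < 0` because then `0 ^ q = 0` in Lean).
-/

/-- A function `f` on a convex set `X` is `q`-convex if
`f (λ x + (1-λ) y) ≤ λ^q f x + (1-λ)^q f y` for all `x, y ∈ X` and `λ ∈ [0,1]`. -/
def QConvexOn {V : Type*} [AddCommGroup V] [Module ℝ V]
    (q : ℝ) (X : Set V) (f : V → ℝ) : Prop :=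
  ∀ ⦃x⦄, x ∈ X → ∀ ⦃y⦄, y ∈ X → ∀ ⦃l : ℝ⦄, l ∈ Set.Icc (0 : ℝ) 1 →
    f (l • x + (1 - l) • y) ≤ l ^ q * f x + (1 - l) ^ q * f y

section

variable {V ι : Type*} [AddCommGroup V] [Module ℝ V] {X : Set V} {q : ℝ} {f : V → ℝ}
  {t : Finset ι} {w : ι → ℝ} {z : ι → V}

namespace QConvexOn

theorem zero_rpow_mul_nonneg (hf : QConvexOn q X f) {x : V} (hx : x ∈ X) :
    0 ≤ (0 : ℝ) ^ q * f x := by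
  simpa using hf hx hx (Set.left_mem_Icc.2 zero_le_one)

theorem add_rpow_mul_map_div_le (hf : QConvexOn q X f) {x y : V} (hx : x ∈ X) (hy : y ∈ X)
    {a b : ℝ} (ha : 0 ≤ a) (hb : 0 ≤ b) (hab : 0 < a + b) :
    (a + b) ^ q * f ((a / (a + b)) • x + (b / (a + b)) • y) ≤ a ^ q * f x + b ^ q * f y := by
  have one_sub_div_eq : 1 - a / (a + b) = b / (a + b) := by
    rw [one_sub_div hab.ne', add_sub_cancel_left]
  have mul_rpow_div {c : ℝ} (hc : 0 ≤ c) : (a + b) ^ q * (c / (a + b)) ^ q = c ^ q := by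
    rw [← Real.mul_rpow hab.le (div_nonneg hc hab.le), mul_div_cancel₀ c hab.ne']
  have two_point := hf hx hy
    ⟨div_nonneg ha hab.le, div_le_one_of_le₀ (le_add_of_nonneg_right hb) hab.le⟩
  rw [one_sub_div_eq] at two_point
  calc
    (a + b) ^ q * f ((a / (a + b)) • x + (b / (a + b)) • y)
      ≤ (a + b) ^ q * ((a / (a + b)) ^ q * f x + (b / (a + b)) ^ q * f y) := by gcongr
    _ = a ^ q * f x + b ^ q * f y := by
      rw [mul_add, ← mul_assoc, ← mul_assoc, mul_rpow_div ha, mul_rpow_div hb]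

theorem sum_rpow_mul_map_centerMass_le_of_pos (hf : QConvexOn q X f) (hX : Convex ℝ X)
    (ht : t.Nonempty) (hw : ∀ i ∈ t, 0 < w i) (hz : ∀ i ∈ t, z i ∈ X) :
    (∑ i ∈ t, w i) ^ q * f (t.centerMass w z) ≤ ∑ i ∈ t, w i ^ q * f (z i) := by
  classical
  induction ht using Finset.Nonempty.cons_induction with
  | singleton i =>
    simp [Finset.centerMass_singleton i z (hw i (Finset.mem_singleton_self i)).ne']
  | cons i t hit ht ih =>
    simp only [Finset.forall_mem_cons] at hw hz
    obtain ⟨hwi, hwt⟩ := hw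
    obtain ⟨hzi, hzt⟩ := hz
    have hsum : 0 < ∑ j ∈ t, w j := Finset.sum_pos hwt ht
    have hmem : t.centerMass w z ∈ X := hX.centerMass_mem (fun j hj => (hwt j hj).le) hsum hzt
    rw [Finset.sum_cons, Finset.sum_cons, Finset.cons_eq_insert,
      Finset.centerMass_insert _ _ _ hit hsum.ne']
    exact (hf.add_rpow_mul_map_div_le hzi hmem hwi.le hsum.le (add_pos hwi hsum)).trans
      (by gcongr; exact ih hwt hzt)

theorem sum_rpow_mul_map_centerMass_le (hf : QConvexOn q X f) (hX : Convex ℝ X)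
    (hw : ∀ i ∈ t, 0 ≤ w i) (hsum : 0 < ∑ i ∈ t, w i) (hz : ∀ i ∈ t, z i ∈ X) :
    (∑ i ∈ t, w i) ^ q * f (t.centerMass w z) ≤ ∑ i ∈ t, w i ^ q * f (z i) := by
  let support := t.filter (w · ≠ 0)
  have support_subset : support ⊆ t := Finset.filter_subset _ t
  have sum_support : ∑ i ∈ support, w i = ∑ i ∈ t, w i := Finset.sum_filter_ne_zero t
  have support_nonempty : support.Nonempty :=
    Finset.nonempty_of_sum_ne_zero (sum_support.trans_ne hsum.ne')
  have pos_of_mem_support : ∀ i ∈ support, 0 < w i := fun i hi =>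
    (hw i (support_subset hi)).lt_of_ne' (Finset.mem_filter.1 hi).2
  calc
    (∑ i ∈ t, w i) ^ q * f (t.centerMass w z)
      = (∑ i ∈ support, w i) ^ q * f (support.centerMass w z) := by
        rw [sum_support, Finset.centerMass_filter_ne_zero]
    _ ≤ ∑ i ∈ support, w i ^ q * f (z i) :=
        hf.sum_rpow_mul_map_centerMass_le_of_pos hX support_nonempty pos_of_mem_support
          fun i hi => hz i (support_subset hi)
    _ ≤ ∑ i ∈ t, w i ^ q * f (z i) := by
        refine Finset.sum_le_sum_of_subset_of_nonneg support_subset fun i hi hi_support => ?_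
        have hwi : w i = 0 := by
          by_contra hne
          exact hi_support (Finset.mem_filter.2 ⟨hi, hne⟩)
        rw [hwi]
        exact hf.zero_rpow_mul_nonneg (hz i hi)

end QConvexOn

theorem jensen_q_inequality_general (hX : Convex ℝ X) (hf : QConvexOn q X f)
    (hw : ∀ i ∈ t, 0 ≤ w i) (hsum : ∑ i ∈ t, w i = 1) (hz : ∀ i ∈ t, z i ∈ X) :
    f (∑ i ∈ t, w i • z i) ≤ ∑ i ∈ t, w i ^ q * f (z i) := by
  simpa [hsum, Finset.centerMass_eq_of_sum_1 t z hsum] using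
    hf.sum_rpow_mul_map_centerMass_le hX hw (hsum.symm ▸ one_pos) hz

end

/-- Jensen's `q`-inequality: if `f` is `q`-convex on a convex set `X`, then for any
points `x₁, …, xₙ ∈ X` and weights `π` in the simplex,
`f (∑ πᵢ xᵢ) ≤ ∑ πᵢ^q f xᵢ`. -/
theorem jensen_q_inequality {V : Type*} [AddCommGroup V] [Module ℝ V]
    {X : Set V} (hX : Convex ℝ X) {q : ℝ} (hq : 0 ≤ q) {f : V → ℝ}
    (hf : QConvexOn q X f) (n : ℕ) (x : Fin n → V) (hx : ∀ i, x i ∈ X)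
    (π : Fin n → ℝ) (hπ0 : ∀ i, 0 ≤ π i) (hπ1 : ∑ i, π i = 1) :
    f (∑ i, π i • x i) ≤ ∑ i, π i ^ q * f (x i) :=
  jensen_q_inequality_general hX hf (fun i _ => hπ0 i) hπ1 (fun i _ => hx i)
end

section
/- Let q ≥ 0, let φ : [0,1] → ℝ be twice continuously differentiable with φ'' > 0 on [0,1], and suppose that the function x ↦ −1/φ''(x) is (2−q)-convex on [0,1]. Define Ψ : [0,1]^n → ℝ by Ψ(z) = −Σ_{i=1}^n φ(z_i). Then for every weight vector π = (π_1,…,π_m) in the simplex Δ^{m-1}, the Jensen q-difference T_{q,Ψ}^π(y_1,…,y_m) = Ψ(Σ_{t=1}^m π_t y_t) − Σ_{t=1}^m π_t^q Ψ(y_t) is a convex function of (y_1,…,y_m) ∈ ([0,1]^n)^m. -/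
/-!
In one coordinate, the second derivative of `∑ t, π t ^ q * φ (y t) - φ (∑ t, π t * y t)` in the
direction `h` is `∑ t, π t ^ q * φ'' (y t) * h t ^ 2 - φ'' (∑ t, π t * y t) * (∑ t, π t * h t) ^ 2`.
Splitting `π t ^ 2 = π t ^ (2 - q) * π t ^ q`, the Cauchy–Schwarz inequality bounds
`(∑ t, π t * h t) ^ 2` by
`(∑ t, π t ^ (2 - q) / φ'' (y t)) * ∑ t, π t ^ q * φ'' (y t) * h t ^ 2`, and Jensen's inequality for
the `(2 - q)`-convex function `-1 / φ''` bounds the first factor by `1 / φ'' (∑ t, π t * y t)`.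
-/

open Finset

section QConvexOn

variable {V ι : Type*} [AddCommGroup V] [Module ℝ V] {X : Set V} {q r : ℝ} {f g : V → ℝ}

lemma QConvexOn.zero_rpow_mul_nonneg_s3 (hf : QConvexOn r X f) {x : V} (hx : x ∈ X) :
    0 ≤ 0 ^ r * f x := by
  simpa using hf hx hx (Set.right_mem_Icc.2 zero_le_one)

lemma QConvexOn.map_sum_le (hf : QConvexOn r X f) (hX : Convex ℝ X) {s : Finset ι} {w : ι → ℝ}
    {x : ι → V} (hw₀ : ∀ t ∈ s, 0 ≤ w t) (hw₁ : ∑ t ∈ s, w t = 1) (hx : ∀ t ∈ s, x t ∈ X) :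
    f (∑ t ∈ s, w t • x t) ≤ ∑ t ∈ s, w t ^ r * f (x t) := by
  induction s using Finset.cons_induction generalizing w with
  | empty => simp at hw₁
  | cons a s ha ih =>
    simp only [forall_mem_cons, sum_cons] at hw₀ hw₁ hx ⊢
    obtain ⟨hwa, hws⟩ := hw₀
    obtain ⟨hxa, hxs⟩ := hx
    have hsum : ∑ t ∈ s, w t = 1 - w a := by linarith
    have hrest : 0 ≤ 1 - w a := hsum ▸ sum_nonneg hws
    rcases hrest.eq_or_lt with hzero | hpos
    · have hws₀ : ∀ t ∈ s, w t = 0 := (sum_eq_zero_iff_of_nonneg hws).1 (hsum.trans hzero.symm)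
      have hwa₁ : w a = 1 := by linarith
      have htail : 0 ≤ ∑ t ∈ s, w t ^ r * f (x t) := sum_nonneg fun t ht => by
        rw [hws₀ t ht]
        exact hf.zero_rpow_mul_nonneg_s3 (hxs t ht)
      have hsmul : ∑ t ∈ s, w t • x t = 0 := sum_eq_zero fun t ht => by rw [hws₀ t ht, zero_smul]
      simpa [hwa₁, hsmul] using htail
    · set v : ι → ℝ := fun t => w t / (1 - w a)
      have hv₀ : ∀ t ∈ s, 0 ≤ v t := fun t ht => div_nonneg (hws t ht) hrest
      have hv₁ : ∑ t ∈ s, v t = 1 := by rw [← sum_div, hsum, div_self hpos.ne']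
      have hwv : ∀ t, w t = (1 - w a) * v t := fun t => (mul_div_cancel₀ _ hpos.ne').symm
      calc f (w a • x a + ∑ t ∈ s, w t • x t)
          = f (w a • x a + (1 - w a) • ∑ t ∈ s, v t • x t) := by
            simp only [smul_sum, smul_smul, ← hwv]
        _ ≤ w a ^ r * f (x a) + (1 - w a) ^ r * f (∑ t ∈ s, v t • x t) :=
            hf hxa (hX.sum_mem hv₀ hv₁ hxs) ⟨hwa, sub_nonneg.1 hrest⟩
        _ ≤ w a ^ r * f (x a) + (1 - w a) ^ r * ∑ t ∈ s, v t ^ r * f (x t) := by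
            gcongr
            exact ih hv₀ hv₁ hxs
        _ = w a ^ r * f (x a) + ∑ t ∈ s, w t ^ r * f (x t) := by
            rw [mul_sum]
            congr 1
            refine sum_congr rfl fun t ht => ?_
            rw [← mul_assoc, ← Real.mul_rpow hrest (hv₀ t ht), ← hwv]

lemma rpow_two_sub_mul_rpow {a : ℝ} (ha : 0 ≤ a) (q : ℝ) : a ^ (2 - q) * a ^ q = a ^ 2 := by
  rw [← Real.rpow_add' ha (by norm_num), sub_add_cancel, Real.rpow_two]

lemma QConvexOn.mul_sum_sq_le (hg : QConvexOn (2 - q) X fun x => -(1 / g x)) (hX : Convex ℝ X)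
    (hpos : ∀ x ∈ X, 0 < g x) {s : Finset ι} {w : ι → ℝ} {x : ι → V} (hw₀ : ∀ t ∈ s, 0 ≤ w t)
    (hw₁ : ∑ t ∈ s, w t = 1) (hx : ∀ t ∈ s, x t ∈ X) (h : ι → ℝ) :
    g (∑ t ∈ s, w t • x t) * (∑ t ∈ s, w t * h t) ^ 2 ≤
      ∑ t ∈ s, w t ^ q * (g (x t) * h t ^ 2) := by
  have hmean : 0 < g (∑ t ∈ s, w t • x t) := hpos _ (hX.sum_mem hw₀ hw₁ hx)
  have hquad : ∀ t ∈ s, 0 ≤ w t ^ q * (g (x t) * h t ^ 2) := fun t ht =>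
    mul_nonneg (Real.rpow_nonneg (hw₀ t ht) q) (mul_nonneg (hpos _ (hx t ht)).le (sq_nonneg _))
  have jensen : ∑ t ∈ s, w t ^ (2 - q) * (1 / g (x t)) ≤ 1 / g (∑ t ∈ s, w t • x t) := by
    simpa using hg.map_sum_le hX hw₀ hw₁ hx
  have cauchy_schwarz : (∑ t ∈ s, w t * h t) ^ 2 ≤
      (∑ t ∈ s, w t ^ (2 - q) * (1 / g (x t))) * ∑ t ∈ s, w t ^ q * (g (x t) * h t ^ 2) := by
    refine sum_sq_le_sum_mul_sum_of_sq_le_mul s (fun t ht => ?_) hquad fun t ht => ?_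
    · exact mul_nonneg (Real.rpow_nonneg (hw₀ t ht) _) (one_div_pos.2 (hpos _ (hx t ht))).le
    · have hgt : g (x t) ≠ 0 := (hpos _ (hx t ht)).ne'
      rw [mul_pow, ← rpow_two_sub_mul_rpow (hw₀ t ht) q]
      exact le_of_eq (by field_simp)
  calc g (∑ t ∈ s, w t • x t) * (∑ t ∈ s, w t * h t) ^ 2
      ≤ g (∑ t ∈ s, w t • x t) * ((1 / g (∑ t ∈ s, w t • x t)) *
          ∑ t ∈ s, w t ^ q * (g (x t) * h t ^ 2)) := by
        gcongr
        exact cauchy_schwarz.trans (mul_le_mul_of_nonneg_right jensen (sum_nonneg hquad))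
    _ = ∑ t ∈ s, w t ^ q * (g (x t) * h t ^ 2) := by field_simp

end QConvexOn

section Convexity

open AffineMap

lemma convex_setOf_forall_mem {E ι : Type*} [AddCommGroup E] [Module ℝ E] {s : Set E}
    (hs : Convex ℝ s) : Convex ℝ {y : ι → E | ∀ t, y t ∈ s} :=
  fun _ hy _ hz _ _ ha hb hab t => hs (hy t) (hz t) ha hb hab

lemma convexOn_sum {E κ : Type*} [AddCommGroup E] [Module ℝ E] [Fintype κ] {S : Set E}
    {f : κ → E → ℝ} (hS : Convex ℝ S) (hf : ∀ i, ConvexOn ℝ S (f i)) :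
    ConvexOn ℝ S fun x => ∑ i, f i x := by
  refine ⟨hS, fun x hx y hy a b ha hb hab => ?_⟩
  simp only [smul_sum, ← sum_add_distrib]
  exact sum_le_sum fun i _ => (hf i).2 hx hy ha hb hab

lemma convexOn_of_forall_lineMap {E : Type*} [AddCommGroup E] [Module ℝ E] {s : Set E} {f : E → ℝ}
    (hs : Convex ℝ s)
    (hf : ∀ x ∈ s, ∀ y ∈ s, ConvexOn ℝ (Set.Icc 0 1) fun a : ℝ => f (lineMap x y a)) :
    ConvexOn ℝ s f := by
  refine ⟨hs, fun x hx y hy a b ha hb hab => ?_⟩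
  have hsegment := (hf x hx y hy).2 (Set.left_mem_Icc.2 zero_le_one)
    (Set.right_mem_Icc.2 zero_le_one) ha hb hab
  simpa [lineMap_apply_module, ← eq_sub_of_add_eq hab] using hsegment

lemma hasDerivWithinAt_comp_lineMap {s : Set ℝ} (hs : Convex ℝ s) {f f' : ℝ → ℝ}
    (hf : ∀ x ∈ s, HasDerivWithinAt f (f' x) s x) {u v : ℝ} (hu : u ∈ s) (hv : v ∈ s)
    {a : ℝ} (ha : a ∈ Set.Icc (0 : ℝ) 1) :
    HasDerivWithinAt (fun b => f (lineMap u v b)) ((v - u) * f' (lineMap u v a))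
      (Set.Icc 0 1) a := by
  rw [mul_comm]
  exact (hf _ (hs.lineMap_mem hu hv ha)).comp a hasDerivWithinAt_lineMap (hs.mapsTo_lineMap hu hv)

lemma hasDerivWithinAt_sum_sub_comp_lineMap {ι : Type*} [Fintype ι] {s : Set ℝ} (hs : Convex ℝ s)
    {f f' : ℝ → ℝ} (hf : ∀ x ∈ s, HasDerivWithinAt f (f' x) s x) {u v : ι → ℝ} {U V : ℝ}
    (hu : ∀ t, u t ∈ s) (hv : ∀ t, v t ∈ s) (hU : U ∈ s) (hV : V ∈ s) (c : ι → ℝ) (C : ℝ)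
    {a : ℝ} (ha : a ∈ Set.Icc (0 : ℝ) 1) :
    HasDerivWithinAt
      (fun b => ∑ t, c t * f (lineMap (u t) (v t) b) - C * f (lineMap U V b))
      (∑ t, c t * (v t - u t) * f' (lineMap (u t) (v t) a) - C * (V - U) * f' (lineMap U V a))
      (Set.Icc 0 1) a := by
  simp only [mul_assoc]
  exact (HasDerivWithinAt.fun_sum fun t _ =>
    (hasDerivWithinAt_comp_lineMap hs hf (hu t) (hv t) ha).const_mul (c t)).sub
    ((hasDerivWithinAt_comp_lineMap hs hf hU hV ha).const_mul C)

lemma sum_smul_lineMap {E ι : Type*} [AddCommGroup E] [Module ℝ E] (s : Finset ι) (w : ι → ℝ)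
    (x y : ι → E) (a : ℝ) :
    ∑ t ∈ s, w t • lineMap (x t) (y t) a =
      lineMap (∑ t ∈ s, w t • x t) (∑ t ∈ s, w t • y t) a := by
  simp only [lineMap_apply_module, smul_add, sum_add_distrib, smul_sum, smul_comm a,
    smul_comm (1 - a)]

end Convexity

section JensenQDiff

variable {V W ι κ : Type*} [AddCommGroup V] [Module ℝ V] [AddCommGroup W] [Module ℝ W] [Fintype ι]

/-- The Jensen `q`-difference `T_{q,Ψ}^π` of `Ψ`, for weights `π` indexed by a finite type. The
powers are `Real.rpow`, so the coefficient of a zero weight is `1` if `q = 0` and `0` if `q ≠ 0`. -/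
noncomputable def jensenQDiff (q : ℝ) (π : ι → ℝ) (Ψ : V → ℝ) (y : ι → V) : ℝ :=
  Ψ (∑ t, π t • y t) - ∑ t, π t ^ q * Ψ (y t)

lemma jensenQDiff_sum [Fintype κ] (q : ℝ) (π : ι → ℝ) (Ψ : κ → V → ℝ) (y : ι → V) :
    jensenQDiff q π (fun z => ∑ i, Ψ i z) y = ∑ i, jensenQDiff q π (Ψ i) y := by
  simp only [jensenQDiff, mul_sum, sum_sub_distrib]
  rw [sum_comm]

lemma jensenQDiff_comp_linearMap (q : ℝ) (π : ι → ℝ) (Ψ : W → ℝ) (L : V →ₗ[ℝ] W) (y : ι → V) :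
    jensenQDiff q π (fun z => Ψ (L z)) y = jensenQDiff q π Ψ (fun t => L (y t)) := by
  simp only [jensenQDiff, map_sum, map_smul]

variable {s : Set ℝ} {q : ℝ} {φ φ' φ'' : ℝ → ℝ} {π : ι → ℝ}

open AffineMap in
lemma convexOn_jensenQDiff_neg (hs : Convex ℝ s)
    (hφ : ∀ x ∈ s, HasDerivWithinAt φ (φ' x) s x)
    (hφ' : ∀ x ∈ s, HasDerivWithinAt φ' (φ'' x) s x)
    (hpos : ∀ x ∈ s, 0 < φ'' x) (hqc : QConvexOn (2 - q) s fun x => -(1 / φ'' x))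
    (hπ₀ : ∀ t, 0 ≤ π t) (hπ₁ : ∑ t, π t = 1) :
    ConvexOn ℝ {y : ι → ℝ | ∀ t, y t ∈ s} (jensenQDiff q π fun x => -φ x) := by
  refine convexOn_of_forall_lineMap (convex_setOf_forall_mem hs) fun y hy z hz => ?_
  set Y := ∑ t, π t • y t
  set Z := ∑ t, π t • z t
  have hY : Y ∈ s := hs.sum_mem (fun t _ => hπ₀ t) hπ₁ fun t _ => hy t
  have hZ : Z ∈ s := hs.sum_mem (fun t _ => hπ₀ t) hπ₁ fun t _ => hz t
  have hrestrict : ∀ a : ℝ, jensenQDiff q π (fun x => -φ x) (lineMap y z a) =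
      ∑ t, π t ^ q * φ (lineMap (y t) (z t) a) - 1 * φ (lineMap Y Z a) := fun a => by
    simp only [jensenQDiff, pi_lineMap_apply, sum_smul_lineMap, mul_neg, sum_neg_distrib]
    ring
  have hderiv := fun a (ha : a ∈ Set.Icc (0 : ℝ) 1) =>
    hasDerivWithinAt_sum_sub_comp_lineMap hs hφ hy hz hY hZ (fun t => π t ^ q) 1 ha
  have hderiv₂ := fun a (ha : a ∈ Set.Icc (0 : ℝ) 1) =>
    hasDerivWithinAt_sum_sub_comp_lineMap hs hφ' hy hz hY hZ
      (fun t => π t ^ q * (z t - y t)) (1 * (Z - Y)) ha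
  simp only [hrestrict]
  refine convexOn_of_hasDerivWithinAt2_nonneg (convex_Icc 0 1)
    (fun a ha => (hderiv a ha).continuousWithinAt)
    (fun a ha => (hderiv a (interior_subset ha)).mono interior_subset)
    (fun a ha => (hderiv₂ a (interior_subset ha)).mono interior_subset) fun a ha => ?_
  have hessian := hqc.mul_sum_sq_le hs hpos (fun t _ => hπ₀ t) hπ₁
    (fun t _ => hs.lineMap_mem (hy t) (hz t) (interior_subset ha)) (fun t => z t - y t)
  have hdir : ∑ t, π t * (z t - y t) = Z - Y := by
    simp only [mul_sub, sum_sub_distrib, Y, Z, smul_eq_mul]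
  rw [sum_smul_lineMap, hdir] at hessian
  convert sub_nonneg.2 hessian using 2
  · exact sum_congr rfl fun t _ => by ring
  · ring

theorem jensen_q_difference_convex_of_qconvex_general [Fintype κ] (hs : Convex ℝ s)
    (hφ : ∀ x ∈ s, HasDerivWithinAt φ (φ' x) s x)
    (hφ' : ∀ x ∈ s, HasDerivWithinAt φ' (φ'' x) s x)
    (hpos : ∀ x ∈ s, 0 < φ'' x) (hqc : QConvexOn (2 - q) s fun x => -(1 / φ'' x))
    (hπ₀ : ∀ t, 0 ≤ π t) (hπ₁ : ∑ t, π t = 1) :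
    ConvexOn ℝ {y : ι → κ → ℝ | ∀ t i, y t i ∈ s}
      (jensenQDiff q π fun z => -∑ i, φ (z i)) := by
  have hcube : Convex ℝ {y : ι → κ → ℝ | ∀ t i, y t i ∈ s} :=
    convex_setOf_forall_mem (convex_setOf_forall_mem hs)
  have hsplit : (jensenQDiff q π fun z : κ → ℝ => -∑ i, φ (z i)) =
      fun y => ∑ i, jensenQDiff q π (fun x => -φ x) (fun t => y t i) := by
    funext y
    simp only [← sum_neg_distrib, jensenQDiff_sum]
    exact sum_congr rfl fun i _ =>
      jensenQDiff_comp_linearMap q π (fun x => -φ x) (LinearMap.proj i) y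
  rw [hsplit]
  exact convexOn_sum hcube fun i =>
    ((convexOn_jensenQDiff_neg hs hφ hφ' hpos hqc hπ₀ hπ₁).comp_linearMap
      ((LinearMap.proj i : (κ → ℝ) →ₗ[ℝ] ℝ).compLeft ι)).subset (fun y hy t => hy t i) hcube

end JensenQDiff

/-- Sufficiency in Proposition 4 (Burbea–Rao type): if `φ : [0,1] → ℝ` is twice
continuously differentiable with `φ'' > 0` on `[0,1]`, and `-1/φ''` is `(2-q)`-convex
on `[0,1]`, then the Jensen `q`-difference
`T(y₁,…,y_m) = Ψ(∑ π_t y_t) - ∑ π_t^q Ψ(y_t)`, with `Ψ(z) = -∑ᵢ φ(zᵢ)`,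
is convex on `([0,1]^n)^m`. -/
theorem jensen_q_difference_convex_of_qconvex (n m : ℕ) (q : ℝ) (hq : 0 ≤ q)
    (φ φ' φ'' : ℝ → ℝ)
    (hd1 : ∀ x ∈ Set.Icc (0 : ℝ) 1, HasDerivAt φ (φ' x) x)
    (hd2 : ∀ x ∈ Set.Icc (0 : ℝ) 1, HasDerivAt φ' (φ'' x) x)
    (hc : ContinuousOn φ'' (Set.Icc (0 : ℝ) 1))
    (hpos : ∀ x ∈ Set.Icc (0 : ℝ) 1, 0 < φ'' x)
    (hqc : QConvexOn (2 - q) (Set.Icc (0 : ℝ) 1) (fun x => -(1 / φ'' x)))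
    (π : Fin m → ℝ) (hπ0 : ∀ t, 0 ≤ π t) (hπ1 : ∑ t, π t = 1) :
    ConvexOn ℝ {y : Fin m → Fin n → ℝ | ∀ t i, y t i ∈ Set.Icc (0 : ℝ) 1}
      (fun y => (-(∑ i, φ (∑ t, π t * y t i))) - ∑ t, π t ^ q * (-(∑ i, φ (y t i)))) := by
  have hconvex := jensen_q_difference_convex_of_qconvex_general (κ := Fin n) (convex_Icc 0 1)
    (fun x hx => (hd1 x hx).hasDerivWithinAt) (fun x hx => (hd2 x hx).hasDerivWithinAt)
    hpos hqc hπ0 hπ1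
  exact hconvex.congr fun y _ => by
    simp only [jensenQDiff, Finset.sum_apply, Pi.smul_apply, smul_eq_mul]
end

section
/- Let q ≥ 0, let φ : [0,1] → ℝ be twice continuously differentiable, and define Ψ : [0,1]^n → ℝ by Ψ(z) = −Σ_{i=1}^n φ(z_i). Fix m ≥ 2 and a weight vector π = (π_1,…,π_m) in the simplex Δ^{m-1} with all π_t > 0. If the Jensen q-difference T_{q,Ψ}^π(y_1,…,y_m) = Ψ(Σ_{t=1}^m π_t y_t) − Σ_{t=1}^m π_t^q Ψ(y_t) is convex on ([0,1]^n)^m, then φ is convex on [0,1]. -/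
/-!
If `φ` is not convex, then some concave parabola touches its graph from above at an interior
point `x`, so that `φ (x + h) + φ (x - h) < 2 φ x` for all small `h ≠ 0`. On the other hand, choose
`v ≠ 0` with `∑ t, π t * v t = 0` and move the arguments along `y t = x + r * v t`. The centre
`∑ t, π t * y t` is then constant, so midpoint convexity of the Jensen `q`-difference at `r = 0`
says that the sum of `φ (x + r * v t) + φ (x - r * v t) - 2 φ x` with the positive weights `π t ^ q`
is nonnegative, a contradiction.
-/

open Filter Set Topology

section Convexity

theorem exists_mem_Ioo_isMaxOn_Icc {α β : Type*} [LinearOrder α] [TopologicalSpace α]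
    [CompactIccSpace α] [LinearOrder β] {f : α → β} {a b c : α}
    (hf : UpperSemicontinuousOn f (Icc a b)) (hc : c ∈ Icc a b) (hac : f a < f c)
    (hbc : f b < f c) : ∃ z ∈ Ioo a b, IsMaxOn f (Icc a b) z := by
  obtain ⟨z, hz, hmax⟩ := hf.exists_isMaxOn ⟨c, hc⟩ isCompact_Icc
  have hza : z ≠ a := by
    rintro rfl
    exact (hmax hc).not_gt hac
  have hzb : z ≠ b := by
    rintro rfl
    exact (hmax hc).not_gt hbc
  exact ⟨z, ⟨hz.1.lt_of_ne' hza, hz.2.lt_of_ne hzb⟩, hmax⟩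

variable {f : ℝ → ℝ} {s : Set ℝ}

theorem exists_isMaxOn_add_quadratic {x y a b : ℝ} (hf : UpperSemicontinuousOn f (Icc x y))
    (hxy : x < y) (ha : 0 < a) (hb : 0 < b) (hab : a + b = 1)
    (h : a * f x + b * f y < f (a * x + b * y)) :
    ∃ z ∈ Ioo x y, ∃ ε > 0, ∃ k, IsMaxOn (fun u => f u + (ε * u ^ 2 + k * u)) (Icc x y) z := by
  obtain ⟨ε, hε, hgap⟩ := exists_pos_mul_lt (sub_pos.2 h) (a * b * (y - x) ^ 2)
  -- This slope gives the perturbed function equal values at `x` and `y`.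
  set k := -((f y - f x) / (y - x)) - ε * (x + y) with hk
  have hkxy : k * (y - x) = f x - f y - ε * (y ^ 2 - x ^ 2) := by
    have : y - x ≠ 0 := (sub_pos.2 hxy).ne'
    rw [hk]
    field_simp
    ring
  have hc : a * x + b * y ∈ Icc x y :=
    convex_Icc x y (left_mem_Icc.2 hxy.le) (right_mem_Icc.2 hxy.le) ha.le hb.le hab
  have husc : UpperSemicontinuousOn (fun u => f u + (ε * u ^ 2 + k * u)) (Icc x y) :=
    hf.add (by fun_prop : Continuous fun u => ε * u ^ 2 + k * u).continuousOn.upperSemicontinuousOn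
  obtain rfl : a = 1 - b := by linarith
  obtain ⟨z, hz, hmax⟩ := exists_mem_Ioo_isMaxOn_Icc husc hc
    (by linear_combination hgap - b * hkxy) (by linear_combination hgap + (1 - b) * hkxy)
  exact ⟨z, hz, ε, hε, k, hmax⟩

theorem eventually_add_lt_two_mul_of_isLocalMax_add_quadratic {z ε k : ℝ} (hε : 0 < ε)
    (hmax : IsLocalMax (fun u => f u + (ε * u ^ 2 + k * u)) z) :
    ∀ᶠ h in 𝓝[≠] 0, f (z + h) + f (z - h) < 2 * f z := by
  have hadd : Tendsto (fun h => z + h) (𝓝[≠] 0) (𝓝 z) :=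
    ((continuous_const_add z).tendsto' 0 z (add_zero z)).mono_left nhdsWithin_le_nhds
  have hsub : Tendsto (fun h => z - h) (𝓝[≠] 0) (𝓝 z) :=
    ((continuous_sub_left z).tendsto' 0 z (sub_zero z)).mono_left nhdsWithin_le_nhds
  filter_upwards [hadd.eventually hmax, hsub.eventually hmax, self_mem_nhdsWithin]
    with h hplus hminus hne
  have hpos : 0 < ε * h ^ 2 := mul_pos hε (sq_pos_of_ne_zero hne)
  linarith

theorem convexOn_of_frequently_two_mul_le_add (hs : Convex ℝ s) (hf : UpperSemicontinuousOn f s)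
    (hfreq : ∀ z ∈ interior s, ∃ᶠ h in 𝓝[≠] 0, 2 * f z ≤ f (z + h) + f (z - h)) :
    ConvexOn ℝ s f := by
  refine LinearOrder.convexOn_of_lt hs fun x hx y hy hxy a b ha hb hab => ?_
  by_contra! hlt
  have hsub : Icc x y ⊆ s := hs.ordConnected.out hx hy
  obtain ⟨z, hz, ε, hε, k, hmax⟩ := exists_isMaxOn_add_quadratic (hf.mono hsub) hxy ha hb hab hlt
  have hzs : z ∈ interior s :=
    mem_interior.2 ⟨Ioo x y, Ioo_subset_Icc_self.trans hsub, isOpen_Ioo, hz⟩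
  have hneg := eventually_add_lt_two_mul_of_isLocalMax_add_quadratic hε
    (hmax.isLocalMax (Icc_mem_nhds hz.1 hz.2))
  obtain ⟨h, hle, hgt⟩ := ((hfreq z hzs).and_eventually hneg).exists
  exact hle.not_gt hgt

end Convexity

section JensenDifference

variable {ι κ E : Type*} [Fintype ι] [Fintype κ] [AddCommGroup E] [Module ℝ E] {w π : ι → ℝ}

theorem two_mul_le_add_of_convexOn {C : Set E} {f : E → ℝ} (hf : ConvexOn ℝ C f) {x u : E}
    (hadd : x + u ∈ C) (hsub : x - u ∈ C) : 2 * f x ≤ f (x + u) + f (x - u) := by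
  have hmid : (1 / 2 : ℝ) • (x + u) + (1 / 2 : ℝ) • (x - u) = x := by module
  have h := hf.2 hadd hsub one_half_pos.le one_half_pos.le (add_halves (1 : ℝ))
  rw [hmid, smul_eq_mul, smul_eq_mul] at h
  linarith

theorem sum_mul_add_sub_two_mul_nonneg_of_convexOn {C : Set (ι → E)} {F Φ : E → ℝ}
    (hconv : ConvexOn ℝ C fun y => F (∑ t, π t • y t) + ∑ t, w t * Φ (y t)) {y u : ι → E}
    (hu : ∑ t, π t • u t = 0) (hadd : y + u ∈ C) (hsub : y - u ∈ C) :
    0 ≤ ∑ t, w t * (Φ (y t + u t) + Φ (y t - u t) - 2 * Φ (y t)) := by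
  have h := two_mul_le_add_of_convexOn hconv hadd hsub
  simp only [Pi.add_apply, Pi.sub_apply, smul_add, smul_sub, Finset.sum_add_distrib,
    Finset.sum_sub_distrib, hu, add_zero, sub_zero] at h
  simp only [mul_sub, mul_add, mul_left_comm _ (2 : ℝ), Finset.sum_add_distrib,
    Finset.sum_sub_distrib, ← Finset.mul_sum]
  linarith

theorem sum_mul_add_sub_two_mul_nonneg_of_convexOn_separable [Nonempty κ] {S : Set ℝ}
    {φ : ℝ → ℝ} {F : (κ → ℝ) → ℝ}
    (hconv : ConvexOn ℝ {y : ι → κ → ℝ | ∀ t i, y t i ∈ S}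
      fun y => F (∑ t, π t • y t) + ∑ t, w t * ∑ i, φ (y t i)) {x : ℝ} {v : ι → ℝ}
    (hv : ∑ t, π t * v t = 0) (hadd : ∀ t, x + v t ∈ S) (hsub : ∀ t, x - v t ∈ S) :
    0 ≤ ∑ t, w t * (φ (x + v t) + φ (x - v t) - 2 * φ x) := by
  have hdiag : ∑ t, π t • (fun _ : κ => v t) = 0 := by
    ext
    simpa using hv
  have h := sum_mul_add_sub_two_mul_nonneg_of_convexOn (F := F)
    (Φ := fun z => ∑ i, φ (z i)) (y := fun _ _ => x) (u := fun t _ => v t) hconv hdiag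
    (fun t _ => hadd t) (fun t _ => hsub t)
  have hcard : (0 : ℝ) < Fintype.card κ := by exact_mod_cast Fintype.card_pos
  refine nonneg_of_mul_nonneg_right (h.trans_eq ?_) hcard
  simp only [Pi.add_apply, Pi.sub_apply, Finset.sum_const, Finset.card_univ, nsmul_eq_mul,
    Finset.mul_sum]
  exact Finset.sum_congr rfl fun t _ => by ring

theorem eventually_sum_mul_add_sub_two_mul_neg {φ : ℝ → ℝ} {x : ℝ} {v : ι → ℝ}
    (hw : ∀ t, 0 < w t) (hv : v ≠ 0)
    (hneg : ∀ᶠ h in 𝓝[≠] 0, φ (x + h) + φ (x - h) < 2 * φ x) :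
    ∀ᶠ r in 𝓝[≠] (0 : ℝ), ∑ t, w t * (φ (x + r * v t) + φ (x - r * v t) - 2 * φ x) < 0 := by
  obtain ⟨t₀, ht₀⟩ := Function.ne_iff.1 hv
  have hterm : ∀ t, v t ≠ 0 →
      ∀ᶠ r in 𝓝[≠] (0 : ℝ), φ (x + r * v t) + φ (x - r * v t) < 2 * φ x := by
    intro t ht
    have hlim : Tendsto (fun r => r * v t) (𝓝[≠] 0) (𝓝[≠] 0) :=
      tendsto_nhdsWithin_iff.2
        ⟨((continuous_mul_const (v t)).tendsto' 0 0 (zero_mul _)).mono_left nhdsWithin_le_nhds,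
          eventually_mem_nhdsWithin.mono fun r hr => mul_ne_zero hr ht⟩
    exact hlim.eventually hneg
  filter_upwards [eventually_all.2 fun t => eventually_imp_distrib_left.2 (hterm t)] with r hr
  refine Finset.sum_neg' (fun t _ => ?_)
    ⟨t₀, Finset.mem_univ t₀, mul_neg_of_pos_of_neg (hw t₀) (sub_neg.2 (hr t₀ ht₀))⟩
  rcases eq_or_ne (v t) 0 with ht | ht
  · simp [ht, two_mul]
  · exact (mul_neg_of_pos_of_neg (hw t) (sub_neg.2 (hr t ht))).le

theorem convex_phi_of_jensen_q_difference_convex_general [Nontrivial ι] [Nonempty κ] {S : Set ℝ}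
    (hS : Convex ℝ S) {φ : ℝ → ℝ} (hφ : UpperSemicontinuousOn φ S) (hw : ∀ t, 0 < w t)
    {F : (κ → ℝ) → ℝ}
    (hconv : ConvexOn ℝ {y : ι → κ → ℝ | ∀ t i, y t i ∈ S}
      fun y => F (∑ t, π t • y t) + ∑ t, w t * ∑ i, φ (y t i)) :
    ConvexOn ℝ S φ := by
  obtain ⟨v, hv, hvπ⟩ := exists_ne_zero_dotProduct_eq_zero π
  refine convexOn_of_frequently_two_mul_le_add hS hφ fun x hx hneg => ?_
  simp only [not_le] at hneg
  have hπ (r : ℝ) : ∑ t, π t * (r * v t) = 0 := by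
    simp only [mul_left_comm _ r, ← Finset.mul_sum]
    rw [← dotProduct, dotProduct_comm, hvπ, mul_zero]
  have hmem (c : ℝ) : ∀ᶠ r in 𝓝[≠] (0 : ℝ), x + r * c ∈ S := by
    have hcont : Continuous fun r => x + r * c := by fun_prop
    exact (hcont.tendsto' 0 x (by simp)).mono_left nhdsWithin_le_nhds
      |>.eventually (mem_interior_iff_mem_nhds.1 hx)
  obtain ⟨r, hlt, hadd, hsub⟩ := ((eventually_sum_mul_add_sub_two_mul_neg hw hv hneg).and
    ((eventually_all.2 fun t => hmem (v t)).and (eventually_all.2 fun t => hmem (-v t)))).exists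
  refine hlt.not_ge (sum_mul_add_sub_two_mul_nonneg_of_convexOn_separable hconv (hπ r) hadd ?_)
  simpa [sub_eq_add_neg] using hsub

end JensenDifference

/-- Necessity in Proposition 4 (Burbea–Rao type), part 1: if `φ : [0,1] → ℝ` is twice
continuously differentiable and the Jensen `q`-difference
`T(y₁,…,y_m) = Ψ(∑ π_t y_t) - ∑ π_t^q Ψ(y_t)`, with `Ψ(z) = -∑ᵢ φ(zᵢ)`,
is convex on `([0,1]^n)^m` (for `m ≥ 2` and strictly positive weights `π` in the
simplex), then `φ` is convex on `[0,1]`. -/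
theorem convex_phi_of_jensen_q_difference_convex (n m : ℕ) (hn : 1 ≤ n) (hm : 2 ≤ m)
    (q : ℝ) (hq : 0 ≤ q)
    (φ φ' φ'' : ℝ → ℝ)
    (hd1 : ∀ x ∈ Set.Icc (0 : ℝ) 1, HasDerivAt φ (φ' x) x)
    (hd2 : ∀ x ∈ Set.Icc (0 : ℝ) 1, HasDerivAt φ' (φ'' x) x)
    (hc : ContinuousOn φ'' (Set.Icc (0 : ℝ) 1))
    (π : Fin m → ℝ) (hπ0 : ∀ t, 0 < π t) (hπ1 : ∑ t, π t = 1)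
    (hconv : ConvexOn ℝ {y : Fin m → Fin n → ℝ | ∀ t i, y t i ∈ Set.Icc (0 : ℝ) 1}
      (fun y => (-(∑ i, φ (∑ t, π t * y t i))) - ∑ t, π t ^ q * (-(∑ i, φ (y t i))))) :
    ConvexOn ℝ (Set.Icc (0 : ℝ) 1) φ := by
  have : Nonempty (Fin n) := Fin.pos_iff_nonempty.1 hn
  have : Nontrivial (Fin m) := Fin.nontrivial_iff_two_le.2 hm
  have hφ : ContinuousOn φ (Set.Icc 0 1) := fun x hx => (hd1 x hx).continuousAt.continuousWithinAt
  exact convex_phi_of_jensen_q_difference_convex_general (π := π) (w := fun t => π t ^ q)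
    (F := fun z => -∑ i, φ (z i)) (convex_Icc 0 1) hφ.upperSemicontinuousOn
    (fun t => Real.rpow_pos_of_pos (hπ0 t) q) (by simpa [sub_eq_add_neg] using hconv)
end

section
/- Let q ≥ 0, let φ : [0,1] → ℝ be twice continuously differentiable with φ'' > 0 on [0,1], and define Ψ : [0,1]^n → ℝ by Ψ(z) = −Σ_{i=1}^n φ(z_i). Fix m ≥ 2 and a weight vector π = (π_1,…,π_m) in the simplex Δ^{m-1} with all π_t > 0. If the Jensen q-difference T_{q,Ψ}^π(y_1,…,y_m) = Ψ(Σ_{t=1}^m π_t y_t) − Σ_{t=1}^m π_t^q Ψ(y_t) is convex on ([0,1]^n)^m, then the function x ↦ −1/φ''(x) is (2−q)-convex on [0,1] with respect to convex combinations weighted by π, i.e. −1/φ''(Σ_t π_t a_t) ≤ −Σ_t π_t^{2−q} / φ''(a_t) for all a_1,…,a_m ∈ [0,1]. -/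
/-!
The gradient of a convex function is monotone. Comparing the gradient at the points `x + ε(u - x)`
and `x + ε(w - x)` and letting `ε → 0⁺` shows that the Hessian at `x` is nonnegative in the
direction `u - w`; since `u` and `w` range over the whole domain, this covers every direction, even
at a boundary point `x`. On the diagonal `y t i = x t` the Jensen `q`-difference is a multiple of
`∑ π_t^q φ(x_t) - φ(∑ π_t x_t)`, so its Hessian at `a` gives
`φ''(∑ π_t a_t) (∑ π_t v_t)² ≤ ∑ π_t^q φ''(a_t) v_t²` for all `v`, and the extremal choice
`v_t = π_t^(1-q) / φ''(a_t)` gives the claim.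
-/

open Set Filter Topology

section SecondOrder

variable {E : Type*} [NormedAddCommGroup E] [NormedSpace ℝ E] {s : Set E} {f : E → ℝ}

theorem apply_sub_le_of_convexOn_of_hasFDerivWithinAt {f' : E →L[ℝ] ℝ} {x y : E}
    (hf : ConvexOn ℝ s f) (hf' : HasFDerivWithinAt f f' s x) (hx : x ∈ s) (hy : y ∈ s) :
    f' (y - x) ≤ f y - f x := by
  have hmaps : MapsTo (AffineMap.lineMap x y) (Icc (0 : ℝ) 1) s :=
    fun _ hε => hf.1.lineMap_mem hx hy hε
  have hline : ConvexOn ℝ (Icc (0 : ℝ) 1) (f ∘ AffineMap.lineMap x y) :=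
    (hf.comp_affineMap _).subset hmaps (convex_Icc 0 1)
  have hderiv : HasDerivWithinAt (f ∘ AffineMap.lineMap x y) (f' (y - x)) (Icc (0 : ℝ) 1) 0 :=
    hf'.comp_hasDerivWithinAt_of_eq 0 AffineMap.hasDerivWithinAt_lineMap hmaps
      (AffineMap.lineMap_apply_zero x y).symm
  simpa [slope_def_field] using
    hline.le_slope_of_hasDerivWithinAt (by simp) (by simp) zero_lt_one hderiv

theorem fderiv_sub_apply_sub_nonneg_of_convexOn {f' : E → E →L[ℝ] ℝ} {x y : E}
    (hf : ConvexOn ℝ s f) (hf' : ∀ z ∈ s, HasFDerivWithinAt f (f' z) s z)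
    (hx : x ∈ s) (hy : y ∈ s) : 0 ≤ (f' x - f' y) (x - y) := by
  have hxy := apply_sub_le_of_convexOn_of_hasFDerivWithinAt hf (hf' x hx) hx hy
  have hyx := apply_sub_le_of_convexOn_of_hasFDerivWithinAt hf (hf' y hy) hy hx
  rw [← neg_sub x y, map_neg] at hxy
  rw [sub_apply]
  linarith

theorem nonneg_of_hasDerivWithinAt_of_nonneg {g : ℝ → ℝ} {g' : ℝ}
    (hg : HasDerivWithinAt g g' (Icc 0 1) 0) (h0 : g 0 = 0)
    (hnonneg : ∀ ε ∈ Ioc (0 : ℝ) 1, 0 ≤ g ε) : 0 ≤ g' := by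
  have hmin : IsMinOn g (Icc 0 1) 0 := fun ε hε => by
    rcases hε.1.eq_or_lt with rfl | hpos
    · exact le_refl (g 0)
    · exact h0.trans_le (hnonneg ε ⟨hpos, hε.2⟩)
  have hone : (1 : ℝ) ∈ posTangentConeAt (Icc 0 1) 0 :=
    mem_posTangentConeAt_of_segment_subset (by simp [segment_eq_Icc])
  simpa using hmin.localize.hasFDerivWithinAt_nonneg hg.hasFDerivWithinAt hone

theorem hessian_sub_nonneg_of_convexOn {f' : E → E →L[ℝ] ℝ} {f'' : E →L[ℝ] E →L[ℝ] ℝ} {x u w : E}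
    (hf : ConvexOn ℝ s f) (hf' : ∀ z ∈ s, HasFDerivWithinAt f (f' z) s z)
    (hf'' : HasFDerivWithinAt f' f'' s x) (hx : x ∈ s) (hu : u ∈ s) (hw : w ∈ s) :
    0 ≤ f'' (u - w) (u - w) := by
  have hmaps : ∀ p ∈ s, MapsTo (AffineMap.lineMap x p) (Icc (0 : ℝ) 1) s :=
    fun _ hp _ hε => hf.1.lineMap_mem hx hp hε
  have hderiv : ∀ p ∈ s, HasDerivWithinAt (fun ε : ℝ => f' (AffineMap.lineMap x p ε))
      (f'' (p - x)) (Icc 0 1) 0 := fun p hp =>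
    hf''.comp_hasDerivWithinAt_of_eq 0 AffineMap.hasDerivWithinAt_lineMap (hmaps p hp)
      (AffineMap.lineMap_apply_zero x p).symm
  have hgap : HasDerivWithinAt
      (fun ε : ℝ => (f' (AffineMap.lineMap x u ε) - f' (AffineMap.lineMap x w ε)) (u - w))
      ((f'' (u - x) - f'' (w - x)) (u - w)) (Icc 0 1) 0 := by
    simpa using ((hderiv u hu).sub (hderiv w hw)).clm_apply (hasDerivWithinAt_const 0 _ (u - w))
  rw [← map_sub, sub_sub_sub_cancel_right] at hgap
  refine nonneg_of_hasDerivWithinAt_of_nonneg hgap (by simp) fun ε hε => ?_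
  have hmono := fderiv_sub_apply_sub_nonneg_of_convexOn hf hf'
    (hmaps u hu (Ioc_subset_Icc_self hε)) (hmaps w hw (Ioc_subset_Icc_self hε))
  have hsub : AffineMap.lineMap x u ε - AffineMap.lineMap x w ε = ε • (u - w) := by
    simp only [AffineMap.lineMap_apply_module]
    module
  rw [hsub, map_smul, smul_eq_mul] at hmono
  exact nonneg_of_mul_nonneg_right hmono hε.1

theorem hessian_nonneg_of_convexOn {f' : E → E →L[ℝ] ℝ} {f'' : E →L[ℝ] E →L[ℝ] ℝ} {x : E}
    (hs : (interior s).Nonempty) (hf : ConvexOn ℝ s f)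
    (hf' : ∀ z ∈ s, HasFDerivWithinAt f (f' z) s z) (hf'' : HasFDerivWithinAt f' f'' s x)
    (hx : x ∈ s) (v : E) : 0 ≤ f'' v v := by
  obtain ⟨p, hp⟩ := hs
  have hcont : Tendsto (fun r : ℝ => p + r • v) (𝓝[>] 0) (𝓝 p) :=
    (Continuous.tendsto' (by fun_prop) 0 p (by simp)).mono_left nhdsWithin_le_nhds
  obtain ⟨r, hrs, hr⟩ :=
    ((hcont.eventually (mem_interior_iff_mem_nhds.1 hp)).and self_mem_nhdsWithin).exists
  have hrv := hessian_sub_nonneg_of_convexOn hf hf' hf'' hx hrs (interior_subset hp)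
  simp only [add_sub_cancel_left, map_smul, smul_apply, smul_eq_mul] at hrv
  exact nonneg_of_mul_nonneg_right (nonneg_of_mul_nonneg_right hrv hr) hr

theorem sum_mul_sq_nonneg_of_convexOn_sum_comp {J : Type*} [Fintype J] {φ φ' φ'' : ℝ → ℝ}
    {I : Set ℝ} {c : J → ℝ} {ℓ : J → E →L[ℝ] ℝ} {x : E}
    (hφ : ∀ r ∈ I, HasDerivWithinAt φ (φ' r) I r) (hφ' : ∀ r ∈ I, HasDerivWithinAt φ' (φ'' r) I r)
    (hs : (interior s).Nonempty) (hℓ : ∀ j, MapsTo (ℓ j) s I)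
    (hf : ConvexOn ℝ s fun x => ∑ j, c j * φ (ℓ j x)) (hx : x ∈ s) (v : E) :
    0 ≤ ∑ j, c j * (φ'' (ℓ j x) * ℓ j v ^ 2) := by
  have hf' : ∀ z ∈ s, HasFDerivWithinAt (fun x => ∑ j, c j * φ (ℓ j x))
      (∑ j, c j • φ' (ℓ j z) • ℓ j) s z := fun z hz =>
    .fun_sum fun j _ =>
      ((hφ _ (hℓ j hz)).comp_hasFDerivWithinAt z (ℓ j).hasFDerivWithinAt (hℓ j)).const_mul (c j)
  have hf'' : HasFDerivWithinAt (fun z => ∑ j, c j • φ' (ℓ j z) • ℓ j)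
      (∑ j, c j • (φ'' (ℓ j x) • ℓ j).smulRight (ℓ j)) s x :=
    .fun_sum fun j _ =>
      (((hφ' _ (hℓ j hx)).comp_hasFDerivWithinAt x (ℓ j).hasFDerivWithinAt
        (hℓ j)).smul_const (ℓ j)).const_smul (c j)
  simpa [pow_two, mul_assoc] using hessian_nonneg_of_convexOn hs hf hf' hf'' hx v

end SecondOrder

section JensenDifference

variable {ι κ : Type*} [Fintype ι] [Fintype κ] {I : Set ℝ} {c π : ι → ℝ} {φ φ' φ'' : ℝ → ℝ}

theorem mul_sq_sum_le_sum_mul_sq_of_convexOn (hI : Convex ℝ I) (hI' : (interior I).Nonempty)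
    (hφ : ∀ r ∈ I, HasDerivWithinAt φ (φ' r) I r) (hφ' : ∀ r ∈ I, HasDerivWithinAt φ' (φ'' r) I r)
    (hπ0 : ∀ t, 0 ≤ π t) (hπ1 : ∑ t, π t = 1)
    (hconv : ConvexOn ℝ (univ.pi fun _ => I)
      fun x : ι → ℝ => ∑ t, c t * φ (x t) - φ (∑ t, π t * x t))
    {a : ι → ℝ} (ha : ∀ t, a t ∈ I) (v : ι → ℝ) :
    φ'' (∑ t, π t * a t) * (∑ t, π t * v t) ^ 2 ≤ ∑ t, c t * (φ'' (a t) * v t ^ 2) := by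
  let mean : (ι → ℝ) →L[ℝ] ℝ := ∑ t, π t • ContinuousLinearMap.proj t
  let ℓ : Option ι → (ι → ℝ) →L[ℝ] ℝ := fun j => j.elim mean ContinuousLinearMap.proj
  have hmean : ∀ x, mean x = ∑ t, π t * x t := fun x => by simp [mean]
  have hℓ : ∀ j, MapsTo (ℓ j) (univ.pi fun _ => I) I := by
    rintro (_ | t) x hx
    · simpa [ℓ, hmean] using hI.sum_mem (fun t _ => hπ0 t) hπ1 (fun t _ => hx t trivial)
    · exact hx t trivial
  have hint : (interior (univ.pi fun _ : ι => I)).Nonempty := by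
    rw [interior_pi_set finite_univ]
    exact univ_pi_nonempty_iff.2 fun _ => hI'
  have hsum : ConvexOn ℝ (univ.pi fun _ => I)
      fun x => ∑ j : Option ι, j.elim (-1) c * φ (ℓ j x) :=
    hconv.congr fun x _ => by simp [Fintype.sum_option, ℓ, hmean, neg_add_eq_sub]
  have hhess := sum_mul_sq_nonneg_of_convexOn_sum_comp hφ hφ' hint hℓ hsum
    (mem_univ_pi.2 ha) v
  simpa [Fintype.sum_option, ℓ, hmean] using hhess

theorem convexOn_jensen_difference_diagonal [Nonempty κ]
    (hconv : ConvexOn ℝ {y : ι → κ → ℝ | ∀ t i, y t i ∈ I}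
      fun y => -(∑ i, φ (∑ t, π t * y t i)) - ∑ t, c t * -(∑ i, φ (y t i))) :
    ConvexOn ℝ (univ.pi fun _ => I)
      fun x : ι → ℝ => ∑ t, c t * φ (x t) - φ (∑ t, π t * x t) := by
  let diagonal : (ι → ℝ) →ₗ[ℝ] ι → κ → ℝ :=
    LinearMap.pi fun t => LinearMap.pi fun _ => LinearMap.proj t
  have hcard : (Fintype.card κ : ℝ) ≠ 0 := Nat.cast_ne_zero.2 Fintype.card_ne_zero
  have hdomain : diagonal ⁻¹' {y | ∀ t i, y t i ∈ I} = univ.pi fun _ => I := by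
    ext x
    simp [diagonal]
  have hvalue : ∀ x : ι → ℝ,
      -(∑ _i : κ, φ (∑ t, π t * x t)) - ∑ t, c t * -(∑ _i : κ, φ (x t)) =
        Fintype.card κ * (∑ t, c t * φ (x t) - φ (∑ t, π t * x t)) := fun x => by
    simp only [Finset.sum_const, Finset.card_univ, nsmul_eq_mul, mul_neg, Finset.sum_neg_distrib,
      mul_left_comm _ (Fintype.card κ : ℝ), ← Finset.mul_sum]
    ring
  have hdiag := (hconv.comp_linearMap diagonal).smul
    (inv_nonneg.2 (Nat.cast_nonneg (Fintype.card κ)))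
  rw [hdomain] at hdiag
  exact hdiag.congr fun x _ =>
    (congrArg _ (hvalue x)).trans (inv_mul_cancel_left₀ hcard _)

theorem sum_sq_div_le_one_div {A : ℝ} {w d : ι → ℝ} (hA : 0 < A) (hd : ∀ t, 0 < d t)
    (hquad : ∀ v : ι → ℝ, A * (∑ t, w t * v t) ^ 2 ≤ ∑ t, d t * v t ^ 2) :
    ∑ t, w t ^ 2 / d t ≤ 1 / A := by
  have hextremal := hquad fun t => w t / d t
  have hlin : ∀ t, w t * (w t / d t) = w t ^ 2 / d t := fun t => by ring
  have hsq : ∀ t, d t * (w t / d t) ^ 2 = w t ^ 2 / d t := fun t => by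
    have := (hd t).ne'
    field_simp
  simp only [hlin, hsq] at hextremal
  by_contra! hlt
  have hpos := (one_div_pos.2 hA).trans hlt
  rw [div_lt_iff₀' hA] at hlt
  nlinarith

theorem qconvex_of_jensen_q_difference_convex_general [Nonempty κ] {q : ℝ} (hI : Convex ℝ I)
    (hI' : (interior I).Nonempty) (hφ : ∀ r ∈ I, HasDerivWithinAt φ (φ' r) I r)
    (hφ' : ∀ r ∈ I, HasDerivWithinAt φ' (φ'' r) I r) (hpos : ∀ r ∈ I, 0 < φ'' r)
    (hπ0 : ∀ t, 0 < π t) (hπ1 : ∑ t, π t = 1)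
    (hconv : ConvexOn ℝ {y : ι → κ → ℝ | ∀ t i, y t i ∈ I}
      fun y => -(∑ i, φ (∑ t, π t * y t i)) - ∑ t, π t ^ q * -(∑ i, φ (y t i)))
    {a : ι → ℝ} (ha : ∀ t, a t ∈ I) :
    -(1 / φ'' (∑ t, π t * a t)) ≤ -∑ t, π t ^ (2 - q) / φ'' (a t) := by
  have hmem : ∑ t, π t * a t ∈ I :=
    hI.sum_mem (fun t _ => (hπ0 t).le) hπ1 (fun t _ => ha t)
  have hhess := mul_sq_sum_le_sum_mul_sq_of_convexOn hI hI' hφ hφ' (fun t => (hπ0 t).le) hπ1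
    (convexOn_jensen_difference_diagonal hconv) ha
  have hsum : ∑ t, π t ^ 2 / (π t ^ q * φ'' (a t)) ≤ 1 / φ'' (∑ t, π t * a t) :=
    sum_sq_div_le_one_div (hpos _ hmem)
      (fun t => mul_pos (Real.rpow_pos_of_pos (hπ0 t) q) (hpos _ (ha t)))
      (by simpa only [mul_assoc] using hhess)
  simpa only [neg_le_neg_iff, Real.rpow_sub (hπ0 _), Real.rpow_two, div_div] using hsum

end JensenDifference

/-- Necessity in Proposition 4 (Burbea–Rao type), part 2: if `φ : [0,1] → ℝ` is twice
continuously differentiable with `φ'' > 0` on `[0,1]`, and the Jensen `q`-difference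
`T(y₁,…,y_m) = Ψ(∑ π_t y_t) - ∑ π_t^q Ψ(y_t)`, with `Ψ(z) = -∑ᵢ φ(zᵢ)`,
is convex on `([0,1]^n)^m` (for `m ≥ 2` and strictly positive weights `π` in the
simplex), then `-1/φ''` is `(2-q)`-convex on `[0,1]` with respect to convex
combinations weighted by `π`:
`-1/φ''(∑ π_t a_t) ≤ -∑ π_t^(2-q) / φ''(a_t)` for all `a₁,…,a_m ∈ [0,1]`. -/
theorem qconvex_of_jensen_q_difference_convex (n m : ℕ) (hn : 1 ≤ n) (hm : 2 ≤ m)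
    (q : ℝ) (hq : 0 ≤ q)
    (φ φ' φ'' : ℝ → ℝ)
    (hd1 : ∀ x ∈ Set.Icc (0 : ℝ) 1, HasDerivAt φ (φ' x) x)
    (hd2 : ∀ x ∈ Set.Icc (0 : ℝ) 1, HasDerivAt φ' (φ'' x) x)
    (hc : ContinuousOn φ'' (Set.Icc (0 : ℝ) 1))
    (hpos : ∀ x ∈ Set.Icc (0 : ℝ) 1, 0 < φ'' x)
    (π : Fin m → ℝ) (hπ0 : ∀ t, 0 < π t) (hπ1 : ∑ t, π t = 1)
    (hconv : ConvexOn ℝ {y : Fin m → Fin n → ℝ | ∀ t i, y t i ∈ Set.Icc (0 : ℝ) 1}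
      (fun y => (-(∑ i, φ (∑ t, π t * y t i))) - ∑ t, π t ^ q * (-(∑ i, φ (y t i))))) :
    ∀ a : Fin m → ℝ, (∀ t, a t ∈ Set.Icc (0 : ℝ) 1) →
      -(1 / φ'' (∑ t, π t * a t)) ≤ -∑ t, π t ^ (2 - q) / φ'' (a t) := by
  have : Nonempty (Fin n) := ⟨⟨0, hn⟩⟩
  exact fun _ ha => qconvex_of_jensen_q_difference_convex_general (convex_Icc 0 1) (by simp)
    (fun r hr => (hd1 r hr).hasDerivWithinAt) (fun r hr => (hd2 r hr).hasDerivWithinAt)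
    hpos hπ0 hπ1 hconv ha
end

section
/- Let q ∈ [0,1), let π = (π_1,…,π_m) be a weight vector in the simplex Δ^{m-1}, and for i = 1,…,l let (p_1^{(i)},…,p_m^{(i)}) be an m-tuple of probability vectors in Δ^{n-1}. Then for every (λ_1,…,λ_l) in the simplex Δ^{l-1}, the Jensen-Tsallis q-difference satisfies T_q^π(Σ_{i=1}^l λ_i p_1^{(i)}, …, Σ_{i=1}^l λ_i p_m^{(i)}) ≤ Σ_{i=1}^l λ_i T_q^π(p_1^{(i)},…,p_m^{(i)}); that is, T_q^π is jointly convex on (Δ^{n-1})^m. -/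
open Finset

/-- The Tsallis `q`-entropy of a finite nonnegative vector `p`:
`S_q(p) = (1/(q-1)) * (1 - ∑ i, p i ^ q)`. -/
noncomputable def tsallisEntropy {ι : Type*} [Fintype ι] (q : ℝ) (p : ι → ℝ) : ℝ :=
  (1 / (q - 1)) * (1 - ∑ i, p i ^ q)

/-- The Jensen-Tsallis `q`-difference of `p₁,…,p_m` with weights `π`:
`T_q^π(p₁,…,p_m) = S_q(∑ⱼ πⱼ pⱼ) - ∑ⱼ πⱼ^q S_q(pⱼ)`. -/
noncomputable def jensenTsallis {n m : ℕ} (q : ℝ) (π : Fin m → ℝ)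
    (p : Fin m → Fin n → ℝ) : ℝ :=
  tsallisEntropy q (∑ j, π j • p j) - ∑ j, π j ^ q * tsallisEntropy q (p j)

/-!
Up to an additive constant and the factor `1 / (1 - q)`, the difference `T_q^π(p)` is the sum over
the outcomes `k` of `F_q(π₁ p₁ₖ, …, π_m p_mₖ)`, where `F_q(y) = (∑ⱼ yⱼ) ^ q - ∑ⱼ yⱼ ^ q`. So it
suffices that `F_q` is convex on the nonnegative orthant, that is, that the Jensen gap
`(E y) ^ q - E (y ^ q)` of the power function is subadditive in `y`. That gap is the mean of the
Bregman divergences `x ^ (q - 1) * G(x, y)` with `x = E y`, where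
`G(x, y) = (1 - q) x + q y - x ^ (1 - q) y ^ q` is the gap in the weighted AM-GM inequality. Now
`G` is nonnegative by AM-GM and subadditive by Hölder's inequality, and `x ^ (q - 1)` is antitone
in `x`.
-/

/-- The difference between the arithmetic and the geometric mean of `x` and `y` with weights `1 - q`
and `q`. For `0 < x`, multiplying it by `x ^ (q - 1)` gives the Bregman divergence
`x ^ q + q * x ^ (q - 1) * (y - x) - y ^ q` of `t ↦ -t ^ q` at `y` relative to `x`. -/
noncomputable def amGmGap (q x y : ℝ) : ℝ :=
  (1 - q) * x + q * y - x ^ (1 - q) * y ^ q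

section PowerGap

variable {ι : Type*} {q : ℝ}

theorem amGmGap_nonneg (hq0 : 0 ≤ q) (hq1 : q ≤ 1) {x y : ℝ} (hx : 0 ≤ x) (hy : 0 ≤ y) :
    0 ≤ amGmGap q x y :=
  sub_nonneg.2 <|
    Real.geom_mean_le_arith_mean2_weighted (sub_nonneg.2 hq1) hq0 hx hy (sub_add_cancel 1 q)

theorem amGmGap_zero_zero (q : ℝ) : amGmGap q 0 0 = 0 := by
  obtain rfl | hq := eq_or_ne q 0
  · simp [amGmGap]
  · simp [amGmGap, Real.zero_rpow hq]

theorem sum_rpow_mul_rpow_le (hq0 : 0 ≤ q) (hq1 : q ≤ 1) (s : Finset ι) {x y : ι → ℝ}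
    (hx : ∀ j ∈ s, 0 ≤ x j) (hy : ∀ j ∈ s, 0 ≤ y j) :
    ∑ j ∈ s, x j ^ (1 - q) * y j ^ q ≤ (∑ j ∈ s, x j) ^ (1 - q) * (∑ j ∈ s, y j) ^ q := by
  obtain rfl | hq0 := hq0.eq_or_lt
  · simp
  obtain rfl | hq1 := hq1.eq_or_lt
  · simp
  have hq1' : 0 < 1 - q := sub_pos.2 hq1
  have hölder := Real.inner_le_Lp_mul_Lq_of_nonneg s
    (Real.HolderConjugate.inv_inv hq1' hq0 (sub_add_cancel 1 q))
    (fun j hj => Real.rpow_nonneg (hx j hj) (1 - q)) (fun j hj => Real.rpow_nonneg (hy j hj) q)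
  rwa [sum_congr rfl fun j hj => Real.rpow_rpow_inv (hx j hj) hq1'.ne',
    sum_congr rfl fun j hj => Real.rpow_rpow_inv (hy j hj) hq0.ne',
    one_div, one_div, inv_inv, inv_inv] at hölder

theorem amGmGap_sum_le (hq0 : 0 ≤ q) (hq1 : q ≤ 1) (s : Finset ι) {x y : ι → ℝ}
    (hx : ∀ j ∈ s, 0 ≤ x j) (hy : ∀ j ∈ s, 0 ≤ y j) :
    amGmGap q (∑ j ∈ s, x j) (∑ j ∈ s, y j) ≤ ∑ j ∈ s, amGmGap q (x j) (y j) := by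
  simp only [amGmGap, sum_sub_distrib, sum_add_distrib, ← mul_sum]
  exact sub_le_sub_left (sum_rpow_mul_rpow_le hq0 hq1 s hx hy) _

-- Pitfall: for `0 < q < 1` a summand with `x j = 0 < y j` is infinite on paper, but in Lean it is
-- zero because `0 ^ (q - 1) = 0`.
theorem rpow_mul_amGmGap_sum_le (hq0 : 0 ≤ q) (hq1 : q ≤ 1) (s : Finset ι) {x y : ι → ℝ}
    (hx : ∀ j ∈ s, 0 ≤ x j) (hy : ∀ j ∈ s, 0 ≤ y j) (hxy : ∀ j ∈ s, x j = 0 → y j = 0) :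
    (∑ j ∈ s, x j) ^ (q - 1) * amGmGap q (∑ j ∈ s, x j) (∑ j ∈ s, y j) ≤
      ∑ j ∈ s, x j ^ (q - 1) * amGmGap q (x j) (y j) := by
  have summand_le : ∀ j ∈ s, (∑ j ∈ s, x j) ^ (q - 1) * amGmGap q (x j) (y j) ≤
      x j ^ (q - 1) * amGmGap q (x j) (y j) := fun j hj => by
    obtain hxj | hxj := (hx j hj).eq_or_lt
    · simp [← hxj, hxy j hj hxj.symm, amGmGap_zero_zero]
    · exact mul_le_mul_of_nonneg_right
        (Real.rpow_le_rpow_of_nonpos hxj (single_le_sum hx hj) (sub_nonpos.2 hq1))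
        (amGmGap_nonneg hq0 hq1 (hx j hj) (hy j hj))
  calc (∑ j ∈ s, x j) ^ (q - 1) * amGmGap q (∑ j ∈ s, x j) (∑ j ∈ s, y j)
    _ ≤ (∑ j ∈ s, x j) ^ (q - 1) * ∑ j ∈ s, amGmGap q (x j) (y j) :=
        mul_le_mul_of_nonneg_left (amGmGap_sum_le hq0 hq1 s hx hy)
          (Real.rpow_nonneg (sum_nonneg hx) _)
    _ = ∑ j ∈ s, (∑ j ∈ s, x j) ^ (q - 1) * amGmGap q (x j) (y j) := mul_sum ..
    _ ≤ ∑ j ∈ s, x j ^ (q - 1) * amGmGap q (x j) (y j) := sum_le_sum summand_le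

theorem rpow_mul_amGmGap {x : ℝ} (hx : 0 < x) (q y : ℝ) :
    x ^ (q - 1) * amGmGap q x y = x ^ q + q * x ^ (q - 1) * (y - x) - y ^ q := by
  have h_rpow : x ^ (q - 1) * x = x ^ q := by rw [← Real.rpow_add_one hx.ne', sub_add_cancel]
  have h_one : x ^ (q - 1) * x ^ (1 - q) = 1 := by
    rw [← Real.rpow_add hx, sub_add_sub_cancel, sub_self, Real.rpow_zero]
  rw [amGmGap]
  linear_combination h_rpow - y ^ q * h_one

theorem mul_add_mul_eq_zero_iff_of_pos {a b u v : ℝ} (ha : 0 < a) (hb : 0 < b) (hu : 0 ≤ u)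
    (hv : 0 ≤ v) : a * u + b * v = 0 ↔ u = 0 ∧ v = 0 := by
  rw [add_eq_zero_iff_of_nonneg (mul_nonneg ha.le hu) (mul_nonneg hb.le hv),
    mul_eq_zero_iff_left ha.ne', mul_eq_zero_iff_left hb.ne']

theorem rpow_sub_mean_rpow_eq (q : ℝ) {a b u v : ℝ} (ha : 0 < a) (hb : 0 < b) (hab : a + b = 1)
    (hu : 0 ≤ u) (hv : 0 ≤ v) :
    (a * u + b * v) ^ q - (a * u ^ q + b * v ^ q) =
      a * ((a * u + b * v) ^ (q - 1) * amGmGap q (a * u + b * v) u) +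
        b * ((a * u + b * v) ^ (q - 1) * amGmGap q (a * u + b * v) v) := by
  have hx : 0 ≤ a * u + b * v := by positivity
  obtain hx | hx := hx.eq_or_lt
  · obtain ⟨rfl, rfl⟩ := (mul_add_mul_eq_zero_iff_of_pos ha hb hu hv).1 hx.symm
    simp [amGmGap_zero_zero, ← add_mul, hab]
  · rw [rpow_mul_amGmGap hx, rpow_mul_amGmGap hx]
    linear_combination
      (q * (a * u + b * v) ^ (q - 1) * (a * u + b * v) - (a * u + b * v) ^ q) * hab

theorem rpow_sum_sub_mean_rpow_sum_le (hq0 : 0 ≤ q) (hq1 : q ≤ 1) (s : Finset ι) {a b : ℝ}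
    (ha : 0 < a) (hb : 0 < b) (hab : a + b = 1) {u v : ι → ℝ} (hu : ∀ j ∈ s, 0 ≤ u j)
    (hv : ∀ j ∈ s, 0 ≤ v j) :
    (a * ∑ j ∈ s, u j + b * ∑ j ∈ s, v j) ^ q -
        (a * (∑ j ∈ s, u j) ^ q + b * (∑ j ∈ s, v j) ^ q) ≤
      ∑ j ∈ s, ((a * u j + b * v j) ^ q - (a * u j ^ q + b * v j ^ q)) := by
  have hx : ∀ j ∈ s, 0 ≤ a * u j + b * v j := fun j hj =>
    add_nonneg (mul_nonneg ha.le (hu j hj)) (mul_nonneg hb.le (hv j hj))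
  have hx_zero : ∀ j ∈ s, a * u j + b * v j = 0 → u j = 0 ∧ v j = 0 := fun j hj =>
    (mul_add_mul_eq_zero_iff_of_pos ha hb (hu j hj) (hv j hj)).1
  have h_sum : a * ∑ j ∈ s, u j + b * ∑ j ∈ s, v j = ∑ j ∈ s, (a * u j + b * v j) := by
    rw [sum_add_distrib, mul_sum, mul_sum]
  rw [rpow_sub_mean_rpow_eq q ha hb hab (sum_nonneg hu) (sum_nonneg hv),
    sum_congr rfl fun j hj => rpow_sub_mean_rpow_eq q ha hb hab (hu j hj) (hv j hj),
    sum_add_distrib, ← mul_sum, ← mul_sum, h_sum]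
  exact add_le_add
    (mul_le_mul_of_nonneg_left
      (rpow_mul_amGmGap_sum_le hq0 hq1 s hx hu fun j hj h => (hx_zero j hj h).1) ha.le)
    (mul_le_mul_of_nonneg_left
      (rpow_mul_amGmGap_sum_le hq0 hq1 s hx hv fun j hj h => (hx_zero j hj h).2) hb.le)

theorem convexOn_rpow_sum_sub_sum_rpow [Fintype ι] (hq0 : 0 ≤ q) (hq1 : q ≤ 1) :
    ConvexOn ℝ (Set.Ici 0) fun y : ι → ℝ => (∑ j, y j) ^ q - ∑ j, y j ^ q := by
  refine convexOn_iff_forall_pos.2 ⟨convex_Ici 0, fun u hu v hv a b ha hb hab => ?_⟩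
  have gap_le := rpow_sum_sub_mean_rpow_sum_le hq0 hq1 univ ha hb hab
    (fun j _ => hu j) (fun j _ => hv j)
  simp only [sum_sub_distrib, sum_add_distrib, ← mul_sum] at gap_le
  simp only [Pi.add_apply, Pi.smul_apply, smul_eq_mul, sum_add_distrib, ← mul_sum]
  linarith

end PowerGap

theorem convexOn_finset_sum {𝕜 E β κ : Type*} [Semiring 𝕜] [PartialOrder 𝕜] [AddCommMonoid E]
    [SMul 𝕜 E] [AddCommMonoid β] [PartialOrder β] [IsOrderedAddMonoid β] [Module 𝕜 β]
    {D : Set E} (hD : Convex 𝕜 D) (s : Finset κ) {f : κ → E → β}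
    (hf : ∀ k ∈ s, ConvexOn 𝕜 D (f k)) : ConvexOn 𝕜 D fun x => ∑ k ∈ s, f k x := by
  rw [← sum_fn]
  exact sum_induction f (ConvexOn 𝕜 D) (fun _ _ => ConvexOn.add) (convexOn_const 0 hD) hf

theorem jensenTsallis_eq {n m : ℕ} (q : ℝ) {π : Fin m → ℝ} (hπ0 : ∀ j, 0 ≤ π j)
    {p : Fin m → Fin n → ℝ} (hp0 : ∀ j k, 0 ≤ p j k) :
    jensenTsallis q π p = (1 - q)⁻¹ *
      (∑ k, ((∑ j, π j * p j k) ^ q - ∑ j, (π j * p j k) ^ q) + (∑ j, π j ^ q - 1)) := by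
  have h_inv : 1 / (q - 1) = -(1 - q)⁻¹ := by rw [← neg_sub 1 q, one_div, inv_neg]
  have h_comm : ∑ k, ∑ j, (π j * p j k) ^ q = ∑ j, π j ^ q * ∑ k, p j k ^ q := by
    simp only [Real.mul_rpow (hπ0 _) (hp0 _ _), mul_sum]
    exact sum_comm
  have h_entropy : ∑ j, π j ^ q * (-(1 - q)⁻¹ * (1 - ∑ k, p j k ^ q)) =
      -(1 - q)⁻¹ * (∑ j, π j ^ q - ∑ j, π j ^ q * ∑ k, p j k ^ q) := by
    rw [← sum_sub_distrib, mul_sum]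
    exact sum_congr rfl fun j _ => by ring
  simp only [jensenTsallis, tsallisEntropy, Finset.sum_apply, Pi.smul_apply, smul_eq_mul]
  rw [h_inv, h_entropy, sum_sub_distrib, h_comm]
  ring

theorem jensenTsallis_jointly_convex_general {n m : ℕ} {q : ℝ} (hq0 : 0 ≤ q) (hq1 : q < 1)
    {π : Fin m → ℝ} (hπ0 : ∀ j, 0 ≤ π j) :
    ConvexOn ℝ (Set.Ici 0) (jensenTsallis (n := n) q π) := by
  let weightedColumn (k : Fin n) : (Fin m → Fin n → ℝ) →ₗ[ℝ] Fin m → ℝ :=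
    LinearMap.pi fun j => π j • (LinearMap.proj k : (Fin n → ℝ) →ₗ[ℝ] ℝ) ∘ₗ LinearMap.proj j
  have column_convex (k : Fin n) : ConvexOn ℝ (Set.Ici 0) fun p : Fin m → Fin n → ℝ =>
      (∑ j, π j * p j k) ^ q - ∑ j, (π j * p j k) ^ q :=
    ((convexOn_rpow_sum_sub_sum_rpow hq0 hq1.le).comp_linearMap (weightedColumn k)).subset
      (fun p hp j => mul_nonneg (hπ0 j) (hp j k)) (convex_Ici 0)
  have sum_convex := convexOn_finset_sum (convex_Ici 0) univ fun k _ => column_convex k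
  exact ((sum_convex.add_const (∑ j, π j ^ q - 1)).smul
    (inv_nonneg.2 (sub_nonneg.2 hq1.le))).congr fun p hp => (jensenTsallis_eq q hπ0 hp).symm

/-- For `q ∈ [0,1)` the Jensen-Tsallis `q`-difference is jointly convex on
`(Δ^{n-1})^m`. -/
theorem jensenTsallis_jointly_convex (n m l : ℕ) (q : ℝ) (hq0 : 0 ≤ q) (hq1 : q < 1)
    (π : Fin m → ℝ) (hπ0 : ∀ j, 0 ≤ π j) (hπ1 : ∑ j, π j = 1)
    (p : Fin l → Fin m → Fin n → ℝ)
    (hp0 : ∀ i j k, 0 ≤ p i j k) (hp1 : ∀ i j, ∑ k, p i j k = 1)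
    (lam : Fin l → ℝ) (hlam0 : ∀ i, 0 ≤ lam i) (hlam1 : ∑ i, lam i = 1) :
    jensenTsallis q π (fun j => ∑ i, lam i • p i j) ≤
      ∑ i, lam i * jensenTsallis q π (p i) := by
  simpa only [sum_fn, Pi.smul_def, smul_eq_mul] using!
    (jensenTsallis_jointly_convex_general hq0 hq1 hπ0).map_sum_le
      (fun i _ => hlam0 i) hlam1 (fun i _ => hp0 i)
end

section
/- Let q ≥ 0, q ≠ 1, let π = (π_1,…,π_m) be a weight vector in the simplex Δ^{m-1}, and let p_1,…,p_m be probability vectors in Δ^{n-1}. Then the Jensen-Tsallis q-difference satisfies T_q^π(p_1,…,p_m) ≤ S_q(π), where S_q(π) is the Tsallis q-entropy of the weight vector π. -/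
open Finset

/-!
Let `(j, k)` have joint weights `πⱼ pⱼ(k)`. The chain rule says that the entropy of this joint
vector is `S_q(π) + ∑ⱼ πⱼ^q S_q(pⱼ)`, while `∑ⱼ πⱼ pⱼ` is its marginal in `k`. The bound is
therefore the statement that a marginal has at most the entropy of the joint vector, which holds
because `x ↦ x ^ q` is subadditive for `q ≤ 1` and superadditive for `1 ≤ q`.
-/

section RpowSum

variable {ι : Type*} {q a b : ℝ} {s : Finset ι} {f : ι → ℝ}

theorem rpow_add_le_add_rpow_of_le_one (ha : 0 ≤ a) (hb : 0 ≤ b) (hq : q ≤ 1) :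
    (a + b) ^ q ≤ a ^ q + b ^ q := by
  rcases le_total 0 q with hq0 | hq0
  · exact Real.rpow_add_le_add_rpow ha hb hq0 hq
  rcases ha.eq_or_lt with rfl | ha'
  · simpa only [zero_add, le_add_iff_nonneg_left] using Real.rpow_nonneg le_rfl q
  calc (a + b) ^ q ≤ a ^ q :=
        Real.rpow_le_rpow_of_nonpos ha' (le_add_of_nonneg_right hb) hq0
    _ ≤ a ^ q + b ^ q := le_add_of_nonneg_right (Real.rpow_nonneg hb q)

theorem rpow_sum_le_sum_rpow_of_le_one (hs : s.Nonempty) (hf : ∀ i ∈ s, 0 ≤ f i) (hq : q ≤ 1) :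
    (∑ i ∈ s, f i) ^ q ≤ ∑ i ∈ s, f i ^ q :=
  le_sum_nonempty_of_subadditive_on_pred (fun x : ℝ ↦ x ^ q) (0 ≤ ·)
    (fun _ _ ha hb ↦ rpow_add_le_add_rpow_of_le_one ha hb hq) (fun _ _ ↦ add_nonneg) f s hs hf

theorem sum_rpow_le_rpow_sum_of_one_le (hf : ∀ i ∈ s, 0 ≤ f i) (hq : 1 ≤ q) :
    ∑ i ∈ s, f i ^ q ≤ (∑ i ∈ s, f i) ^ q :=
  le_sum_of_subadditive_on_pred (N := ℝᵒᵈ) (fun x : ℝ ↦ OrderDual.toDual (x ^ q)) (0 ≤ ·)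
    (Real.zero_rpow (zero_lt_one.trans_le hq).ne').ge
    (fun _ _ ha hb ↦ Real.add_rpow_le_rpow_add ha hb hq) (fun _ _ ↦ add_nonneg) f hf

end RpowSum

section Joint

variable {ι κ : Type*} [Fintype ι] [Fintype κ] {q : ℝ}

theorem tsallisEntropy_joint {π : ι → ℝ} {p : ι → κ → ℝ} (hπ : ∀ j, 0 ≤ π j)
    (hp : ∀ j k, 0 ≤ p j k) :
    tsallisEntropy q (fun x : ι × κ ↦ π x.1 * p x.1 x.2) =
      tsallisEntropy q π + ∑ j, π j ^ q * tsallisEntropy q (p j) := by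
  have sum_rpow_joint :
      ∑ x : ι × κ, (π x.1 * p x.1 x.2) ^ q = ∑ j, π j ^ q * ∑ k, p j k ^ q := by
    simp only [Fintype.sum_prod_type, Real.mul_rpow (hπ _) (hp _ _), mul_sum]
  have sum_conditional : ∑ j, π j ^ q * tsallisEntropy q (p j) =
      1 / (q - 1) * (∑ j, π j ^ q - ∑ j, π j ^ q * ∑ k, p j k ^ q) := by
    rw [← sum_sub_distrib, mul_sum]
    exact sum_congr rfl fun j _ ↦ by rw [tsallisEntropy]; ring
  rw [sum_conditional, tsallisEntropy, sum_rpow_joint, tsallisEntropy]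
  ring

theorem tsallisEntropy_marginal_le [Nonempty ι] (hq : q ≠ 1) {f : ι × κ → ℝ} (hf : ∀ x, 0 ≤ f x) :
    tsallisEntropy q (fun k ↦ ∑ j, f (j, k)) ≤ tsallisEntropy q f := by
  unfold tsallisEntropy
  rw [Fintype.sum_prod_type_right]
  rcases hq.lt_or_gt with hq | hq
  · refine mul_le_mul_of_nonpos_left (sub_le_sub_left (sum_le_sum fun k _ ↦ ?_) 1)
      (one_div_nonpos.mpr (sub_nonpos.mpr hq.le))
    exact rpow_sum_le_sum_rpow_of_le_one univ_nonempty (fun j _ ↦ hf (j, k)) hq.le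
  · refine mul_le_mul_of_nonneg_left (sub_le_sub_left (sum_le_sum fun k _ ↦ ?_) 1)
      (one_div_nonneg.mpr (sub_nonneg.mpr hq.le))
    exact sum_rpow_le_rpow_sum_of_one_le (fun j _ ↦ hf (j, k)) hq.le

end Joint

-- For `q < 0`, the convention `0 ^ q = 0` restricts the power sums to the supports of the vectors.
theorem jensenTsallis_le_entropy_weights_general {n m : ℕ} [NeZero m] {q : ℝ} (hq : q ≠ 1)
    {π : Fin m → ℝ} (hπ : ∀ j, 0 ≤ π j) {p : Fin m → Fin n → ℝ} (hp : ∀ j k, 0 ≤ p j k) :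
    jensenTsallis q π p ≤ tsallisEntropy q π := by
  have mixture_eq_marginal : ∑ j, π j • p j = fun k ↦ ∑ j, π j * p j k := by
    ext k
    simp only [Finset.sum_apply, Pi.smul_apply, smul_eq_mul]
  rw [jensenTsallis, sub_le_iff_le_add, ← tsallisEntropy_joint hπ hp, mixture_eq_marginal]
  exact tsallisEntropy_marginal_le (f := fun x ↦ π x.1 * p x.1 x.2) hq
    fun x ↦ mul_nonneg (hπ x.1) (hp x.1 x.2)

/-- Upper bound for the Jensen-Tsallis `q`-difference: `T_q^π(p₁,…,p_m) ≤ S_q(π)`. -/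
theorem jensenTsallis_le_entropy_weights (n m : ℕ) (q : ℝ) (hq0 : 0 ≤ q) (hq1 : q ≠ 1)
    (π : Fin m → ℝ) (hπ0 : ∀ j, 0 ≤ π j) (hπ1 : ∑ j, π j = 1)
    (p : Fin m → Fin n → ℝ) (hp0 : ∀ j k, 0 ≤ p j k) (hp1 : ∀ j, ∑ k, p j k = 1) :
    jensenTsallis q π p ≤ tsallisEntropy q π := by
  have : NeZero m := ⟨by rintro rfl; simp at hπ1⟩
  exact jensenTsallis_le_entropy_weights_general hq1 hπ0 hp0
end

section
/- Let q > 1, let π = (π_1,…,π_m) be a weight vector in the simplex Δ^{m-1}, and let p_1,…,p_m be probability vectors in Δ^{n-1}. Then the Jensen-Tsallis q-difference is nonnegative: T_q^π(p_1,…,p_m) ≥ 0. -/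
open Finset

/-! For `q > 1` the entropy `S_q` is concave on the nonnegative orthant, so that
`∑ j, π j * S_q (p j) ≤ S_q (∑ j, π j • p j)`. As `S_q (p j) ≥ 0`, passing from the weights `π j` to
`π j ^ q ≤ π j` only decreases the left-hand side. If the weights sum to less than `1`, the missing
mass is put on the zero vector, whose entropy is also nonnegative. -/

lemma convexOn_sum_s10 {ι 𝕜 E β : Type*} [Semiring 𝕜] [PartialOrder 𝕜] [AddCommMonoid E] [SMul 𝕜 E]
    [AddCommMonoid β] [PartialOrder β] [IsOrderedAddMonoid β] [Module 𝕜 β] {s : Set E}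
    {t : Finset ι} {f : ι → E → β} (hs : Convex 𝕜 s) (hf : ∀ i ∈ t, ConvexOn 𝕜 s (f i)) :
    ConvexOn 𝕜 s (∑ i ∈ t, f i) :=
  sum_induction f (ConvexOn 𝕜 s) (fun _ _ ↦ ConvexOn.add) (convexOn_const 0 hs) hf

lemma convexOn_sum_rpow {ι : Type*} (t : Finset ι) {q : ℝ} (hq : 1 ≤ q) :
    ConvexOn ℝ (Set.Ici 0) fun p : ι → ℝ ↦ ∑ i ∈ t, p i ^ q := by
  have convexOn_coord_rpow (i : ι) : ConvexOn ℝ (Set.Ici 0) fun p : ι → ℝ ↦ p i ^ q :=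
    ((convexOn_rpow hq).comp_linearMap (LinearMap.proj i : (ι → ℝ) →ₗ[ℝ] ℝ)).subset
      (fun _ hp ↦ hp i) (convex_Ici 0)
  simpa only [sum_fn] using convexOn_sum_s10 (convex_Ici 0) fun i (_ : i ∈ t) ↦ convexOn_coord_rpow i

lemma sum_rpow_le_sum_of_sum_le_one {ι : Type*} {t : Finset ι} {p : ι → ℝ} {q : ℝ} (hq : 1 ≤ q)
    (hp0 : ∀ i ∈ t, 0 ≤ p i) (hp1 : ∑ i ∈ t, p i ≤ 1) : ∑ i ∈ t, p i ^ q ≤ ∑ i ∈ t, p i :=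
  sum_le_sum fun i hi ↦
    Real.rpow_le_self_of_le_one (hp0 i hi) ((single_le_sum hp0 hi).trans hp1) hq

section TsallisEntropy

variable {ι κ : Type*} [Fintype ι] [Fintype κ] {q : ℝ}

lemma concaveOn_tsallisEntropy (hq : 1 < q) :
    ConcaveOn ℝ (Set.Ici 0) (tsallisEntropy q : (ι → ℝ) → ℝ) :=
  ((concaveOn_const 1 (convex_Ici 0)).sub (convexOn_sum_rpow univ hq.le)).smul
    (one_div_nonneg.2 (sub_nonneg.2 hq.le))

lemma tsallisEntropy_nonneg {p : ι → ℝ} (hq : 1 < q) (hp0 : ∀ i, 0 ≤ p i)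
    (hp1 : ∑ i, p i ≤ 1) : 0 ≤ tsallisEntropy q p :=
  mul_nonneg (one_div_nonneg.2 (sub_nonneg.2 hq.le))
    (sub_nonneg.2 <| (sum_rpow_le_sum_of_sum_le_one hq.le (fun i _ ↦ hp0 i) hp1).trans hp1)

lemma sum_mul_tsallisEntropy_le {π : κ → ℝ} {p : κ → ι → ℝ} (hq : 1 < q)
    (hπ0 : ∀ j, 0 ≤ π j) (hπ1 : ∑ j, π j ≤ 1) (hp0 : ∀ j k, 0 ≤ p j k) :
    ∑ j, π j * tsallisEntropy q (p j) ≤ tsallisEntropy q (∑ j, π j • p j) := by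
  have entropy_zero_nonneg : 0 ≤ tsallisEntropy q (0 : ι → ℝ) :=
    tsallisEntropy_nonneg hq (fun _ ↦ le_rfl) (by simp)
  calc ∑ j, π j * tsallisEntropy q (p j)
      ≤ (1 - ∑ j, π j) * tsallisEntropy q (0 : ι → ℝ) + ∑ j, π j * tsallisEntropy q (p j) :=
        le_add_of_nonneg_left (mul_nonneg (sub_nonneg.2 hπ1) entropy_zero_nonneg)
    _ ≤ tsallisEntropy q ((1 - ∑ j, π j) • 0 + ∑ j, π j • p j) :=
        (concaveOn_tsallisEntropy hq).map_add_sum_le (fun j _ ↦ hπ0 j) (sub_add_cancel _ _)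
          (fun j _ ↦ hp0 j) (sub_nonneg.2 hπ1) Set.self_mem_Ici
    _ = tsallisEntropy q (∑ j, π j • p j) := by rw [smul_zero, zero_add]

theorem jensenTsallis_nonneg_general {π : κ → ℝ} {p : κ → ι → ℝ} (hq : 1 < q)
    (hπ0 : ∀ j, 0 ≤ π j) (hπ1 : ∑ j, π j ≤ 1) (hp0 : ∀ j k, 0 ≤ p j k)
    (hS : ∀ j, 0 ≤ tsallisEntropy q (p j)) :
    ∑ j, π j ^ q * tsallisEntropy q (p j) ≤ tsallisEntropy q (∑ j, π j • p j) := by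
  have weight_le_one (j : κ) : π j ≤ 1 :=
    (single_le_sum (fun i _ ↦ hπ0 i) (mem_univ j)).trans hπ1
  calc ∑ j, π j ^ q * tsallisEntropy q (p j)
      ≤ ∑ j, π j * tsallisEntropy q (p j) :=
        sum_le_sum fun j _ ↦ mul_le_mul_of_nonneg_right
          (Real.rpow_le_self_of_le_one (hπ0 j) (weight_le_one j) hq.le) (hS j)
    _ ≤ tsallisEntropy q (∑ j, π j • p j) := sum_mul_tsallisEntropy_le hq hπ0 hπ1 hp0

end TsallisEntropy

/-- For `q > 1`, the Jensen-Tsallis `q`-difference is nonnegative. -/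
theorem jensenTsallis_nonneg (n m : ℕ) (q : ℝ) (hq : 1 < q)
    (π : Fin m → ℝ) (hπ0 : ∀ j, 0 ≤ π j) (hπ1 : ∑ j, π j = 1)
    (p : Fin m → Fin n → ℝ) (hp0 : ∀ j k, 0 ≤ p j k) (hp1 : ∀ j, ∑ k, p j k = 1) :
    0 ≤ jensenTsallis q π p :=
  sub_nonneg.2 <| jensenTsallis_nonneg_general hq hπ0 hπ1.le hp0 fun j ↦
    tsallisEntropy_nonneg hq (hp0 j) (hp1 j).le
end
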